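/- For a > 1 and i ≥ 1 an integer, at any y in (1/a, 1) satisfying 2a²y³ + i(a²-1)y² - 2y - i = 0, the quantity 1 + (a/(y(1-y²)))·(dy/da) equals (1 + y²(3a²y² - 1 - a²) + iy(1 - y² + a²y²)) / (-(1-y²)(iy(a²-1) + 3a²y² - 1)), and this quantity is negative. -/

import Mathlib

/-!
Write `t` for `i` and `s` for `a²y²`. The cubic equation reads `2y(s - 1) = t(1 + y² - s)`, and
`s > 1` because `y > 1/a`, so `1 < s < 1 + y²`. The numerator of the closed form is
`(1 + y² - s) + y²(3s - 2) + ty(1 - y² + s)`, in which every term is then nonnegative and the first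
is positive. The quotient standing for `dy/da` is `-(∂P/∂a)/(∂P/∂y)`, where `P` is the cubic.
-/

section OrderedRing

variable {R : Type*} [CommRing R] [LinearOrder R] [IsStrictOrderedRing R] {t a y : R}

lemma sq_mul_sq_lt_one_add_sq_of_root (ht : 0 ≤ t) (hy : 0 < y) (hs : 1 < a ^ 2 * y ^ 2)
    (hroot : 2 * a ^ 2 * y ^ 3 + t * (a ^ 2 - 1) * y ^ 2 - 2 * y - t = 0) :
    a ^ 2 * y ^ 2 < 1 + y ^ 2 := by
  have root_balance : 2 * y * (a ^ 2 * y ^ 2 - 1) = t * (1 + y ^ 2 - a ^ 2 * y ^ 2) := by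
    linear_combination hroot
  have lhs_pos : 0 < 2 * y * (a ^ 2 * y ^ 2 - 1) := mul_pos (by positivity) (sub_pos.2 hs)
  exact sub_pos.1 (pos_of_mul_pos_right (root_balance ▸ lhs_pos) ht)

lemma slope_denominator_pos (ht : 0 ≤ t) (hy : 0 ≤ y) (ha : 1 ≤ a ^ 2)
    (hs : 1 ≤ a ^ 2 * y ^ 2) :
    0 < t * y * (a ^ 2 - 1) + 3 * a ^ 2 * y ^ 2 - 1 := by
  have linear_term_nonneg : 0 ≤ t * y * (a ^ 2 - 1) :=
    mul_nonneg (mul_nonneg ht hy) (sub_nonneg.2 ha)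
  linarith

lemma one_add_slope_numerator_pos (ht : 0 ≤ t) (hy : 0 ≤ y) (hy_sq : y ^ 2 ≤ 1)
    (hs : 1 ≤ a ^ 2 * y ^ 2) (hs' : a ^ 2 * y ^ 2 < 1 + y ^ 2) :
    0 < 1 + y ^ 2 * (3 * a ^ 2 * y ^ 2 - 1 - a ^ 2) + t * y * (1 - y ^ 2 + a ^ 2 * y ^ 2) := by
  have sq_term_nonneg : 0 ≤ y ^ 2 * (3 * (a ^ 2 * y ^ 2) - 2) :=
    mul_nonneg (sq_nonneg y) (by linarith)
  have linear_term_nonneg : 0 ≤ t * y * (1 - y ^ 2 + a ^ 2 * y ^ 2) :=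
    mul_nonneg (mul_nonneg ht hy) (by linarith)
  calc
    0 < (1 + y ^ 2 - a ^ 2 * y ^ 2) + y ^ 2 * (3 * (a ^ 2 * y ^ 2) - 2) +
        t * y * (1 - y ^ 2 + a ^ 2 * y ^ 2) := by linarith
    _ = _ := by ring

end OrderedRing

lemma one_add_mul_slope_eq_div {K : Type*} [Field K] {t a y : K} (hw : 1 - y ^ 2 ≠ 0)
    (hD : t * y * (a ^ 2 - 1) + 3 * a ^ 2 * y ^ 2 - 1 ≠ 0) :
    1 + (a / (y * (1 - y ^ 2))) *
        (-a * y ^ 2 * (t + 2 * y) / (t * y * (a ^ 2 - 1) + 3 * a ^ 2 * y ^ 2 - 1)) =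
      (1 + y ^ 2 * (3 * a ^ 2 * y ^ 2 - 1 - a ^ 2) + t * y * (1 - y ^ 2 + a ^ 2 * y ^ 2)) /
        (-((1 - y ^ 2) * (t * y * (a ^ 2 - 1) + 3 * a ^ 2 * y ^ 2 - 1))) := by
  have numerator_eq :
      1 + y ^ 2 * (3 * a ^ 2 * y ^ 2 - 1 - a ^ 2) + t * y * (1 - y ^ 2 + a ^ 2 * y ^ 2) =
        a ^ 2 * y * (t + 2 * y) -
          (1 - y ^ 2) * (t * y * (a ^ 2 - 1) + 3 * a ^ 2 * y ^ 2 - 1) := by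
    ring
  rw [numerator_eq]
  generalize t * y * (a ^ 2 - 1) + 3 * a ^ 2 * y ^ 2 - 1 = D at *
  generalize 1 - y ^ 2 = w at *
  field_simp
  ring

theorem stmt_18_general {K : Type*} [Field K] [LinearOrder K] [IsStrictOrderedRing K] {t a y : K}
    (ht : 0 ≤ t) (ha : 0 < a) (hy₁ : 1 / a < y) (hy₂ : y < 1)
    (hroot : 2 * a ^ 2 * y ^ 3 + t * (a ^ 2 - 1) * y ^ 2 - 2 * y - t = 0) :
    1 + (a / (y * (1 - y ^ 2))) *
        (-a * y ^ 2 * (t + 2 * y) / (t * y * (a ^ 2 - 1) + 3 * a ^ 2 * y ^ 2 - 1)) =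
      (1 + y ^ 2 * (3 * a ^ 2 * y ^ 2 - 1 - a ^ 2) + t * y * (1 - y ^ 2 + a ^ 2 * y ^ 2)) /
        (-((1 - y ^ 2) * (t * y * (a ^ 2 - 1) + 3 * a ^ 2 * y ^ 2 - 1))) ∧
    1 + (a / (y * (1 - y ^ 2))) *
        (-a * y ^ 2 * (t + 2 * y) / (t * y * (a ^ 2 - 1) + 3 * a ^ 2 * y ^ 2 - 1)) < 0 := by
  have hy : 0 < y := (one_div_pos.2 ha).trans hy₁
  have hy_sq : y ^ 2 < 1 := pow_lt_one₀ hy.le hy₂ two_ne_zero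
  have ha_one : 1 < a := (div_lt_one ha).1 (hy₁.trans hy₂)
  have hs : 1 < a ^ 2 * y ^ 2 :=
    mul_pow a y 2 ▸ one_lt_pow₀ ((div_lt_iff₀' ha).1 hy₁) two_ne_zero
  have hs' := sq_mul_sq_lt_one_add_sq_of_root ht hy hs hroot
  have hD := slope_denominator_pos ht hy.le (one_le_pow₀ ha_one.le) hs.le
  have hw : 0 < 1 - y ^ 2 := sub_pos.2 hy_sq
  have closed_form := one_add_mul_slope_eq_div hw.ne' hD.ne'
  refine ⟨closed_form, closed_form ▸ div_neg_of_pos_of_neg ?_ (neg_neg_of_pos (mul_pos hw hD))⟩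
  exact one_add_slope_numerator_pos ht hy.le hy_sq.le hs.le hs'

theorem stmt_18 (i : ℕ) (hi : 1 ≤ i) (a y : ℝ) (ha : 1 < a)
    (hy₁ : 1 / a < y) (hy₂ : y < 1)
    (hroot : 2 * a ^ 2 * y ^ 3 + i * (a ^ 2 - 1) * y ^ 2 - 2 * y - i = 0) :
    1 + (a / (y * (1 - y ^ 2))) *
        (-a * y ^ 2 * (i + 2 * y) / (i * y * (a ^ 2 - 1) + 3 * a ^ 2 * y ^ 2 - 1)) =
      (1 + y ^ 2 * (3 * a ^ 2 * y ^ 2 - 1 - a ^ 2) + i * y * (1 - y ^ 2 + a ^ 2 * y ^ 2)) /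
        (-((1 - y ^ 2) * (i * y * (a ^ 2 - 1) + 3 * a ^ 2 * y ^ 2 - 1))) ∧
    1 + (a / (y * (1 - y ^ 2))) *
        (-a * y ^ 2 * (i + 2 * y) / (i * y * (a ^ 2 - 1) + 3 * a ^ 2 * y ^ 2 - 1)) < 0 :=
  stmt_18_general i.cast_nonneg (zero_lt_one.trans ha) hy₁ hy₂ hroot
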